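/- Let L be the centerless twisted N=2 superconformal algebra, V = L ⊗ L the L-module under the adjoint diagonal action, and let d₀ be an odd (parity 1̄) homogeneous super-derivation from L to V of degree 0 with respect to the (1/2)ℤ-grading. Then d₀ is inner: there exists u ∈ V_0 of odd parity such that d₀(x) = (−1)^{[x]} x ∗ u for all homogeneous x ∈ L. -/

import Mathlib

namespace N2

/-- Basis indices of the centerless twisted N=2 superconformal algebra:
`L m` is the Virasoro generator `L_m` (`m ∈ ℤ`),
`T k` is the Heisenberg generator `T_{k+1/2}` (`k ∈ ℤ`, index in `1/2 + ℤ`),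
`G n` is the fermionic generator `G_{n/2}` (`n ∈ ℤ`, index in `(1/2)ℤ`). -/
inductive Idx : Type
  | L : ℤ → Idx
  | T : ℤ → Idx
  | G : ℤ → Idx
  deriving DecidableEq

noncomputable section

/-- The centerless twisted N=2 superconformal algebra `𝓛`, as the free
complex vector space on the basis `{L_m, T_r, G_p}`. -/
abbrev Lsa : Type := Idx →₀ ℂ

/-- `𝓛 ⊗ 𝓛`, realized as the free complex vector space on pairs of basis indices. -/
abbrev V : Type := (Idx × Idx) →₀ ℂ

/-- `𝓛 ⊗ 𝓛 ⊗ 𝓛`. -/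
abbrev W : Type := (Idx × Idx × Idx) →₀ ℂ

/-- the basis vector indexed by `i`. -/
def e (i : Idx) : Lsa := Finsupp.single i 1

/-- the ℤ₂-parity of the basis elements: `L_m, T_r` are even, `G_p` is odd. -/
def par : Idx → ZMod 2
  | .L _ => 0
  | .T _ => 0
  | .G _ => 1

/-- the sign `(-1)^p` for `p ∈ ℤ₂`. -/
def sgn (p : ZMod 2) : ℂ := if p = 0 then 1 else -1

/-- the `(1/2)ℤ`-degree of a basis element, as a rational number:
`L_m ↦ m`, `T_{k+1/2} ↦ k + 1/2`, `G_{n/2} ↦ n/2`. -/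
def qdeg : Idx → ℚ
  | .L m => (m : ℚ)
  | .T k => (k : ℚ) + 1/2
  | .G n => (n : ℚ) / 2

/-- The super-bracket of `𝓛` on basis elements:
`[L_m, L_n] = (m-n) L_{m+n}`, `[L_m, T_r] = -r T_{r+m}`, `[T_r, T_s] = 0`,
`[L_m, G_p] = (m/2 - p) G_{p+m}`, `[T_r, G_p] = G_{p+r}`,
`[G_p, G_q] = (-1)^{2p} 2 L_{p+q}` if `p+q ∈ ℤ` and
`[G_p, G_q] = (-1)^{2p+1} (p-q) T_{p+q}` if `p+q ∈ 1/2+ℤ`,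
together with the super skew-symmetric counterparts. -/
def bk : Idx → Idx → Lsa
  | .L m, .L n => ((m : ℂ) - n) • e (.L (m + n))
  | .L m, .T k => (-((k : ℂ) + 1/2)) • e (.T (k + m))
  | .L m, .G n => (((m : ℂ) - n) / 2) • e (.G (n + 2*m))
  | .T k, .L m => ((k : ℂ) + 1/2) • e (.T (k + m))
  | .T _, .T _ => 0
  | .T k, .G n => e (.G (n + 2*k + 1))
  | .G n, .L m => (-((m : ℂ) - n) / 2) • e (.G (n + 2*m))
  | .G n, .T k => - e (.G (n + 2*k + 1))
  | .G n, .G n' =>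
      if (n + n') % 2 = 0 then
        ((-1 : ℂ) ^ n * 2) • e (.L ((n + n') / 2))
      else
        ((-1 : ℂ) ^ (n + 1) * (((n : ℂ) - n') / 2)) • e (.T ((n + n' - 1) / 2))

/-- the bracket of `𝓛`, extended bilinearly to all of `𝓛`. -/
def br (x y : Lsa) : Lsa :=
  x.sum fun i a => y.sum fun j b => (a * b) • bk i j

/-- the adjoint diagonal action of `𝓛` on `𝓛 ⊗ 𝓛`:
`x ∗ (a ⊗ b) = [x,a] ⊗ b + (-1)^{[x][a]} a ⊗ [x,b]`. -/
def act2 (x : Lsa) (v : V) : V :=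
  x.sum fun i a => v.sum fun p c =>
    (a * c) •
      (((bk i p.1).sum fun k t => Finsupp.single (k, p.2) t)
        + sgn (par i * par p.1) • ((bk i p.2).sum fun k t => Finsupp.single (p.1, k) t))

/-- the adjoint diagonal action of `𝓛` on `𝓛 ⊗ 𝓛 ⊗ 𝓛`. -/
def act3 (x : Lsa) (w : W) : W :=
  x.sum fun i a => w.sum fun p c =>
    (a * c) •
      (((bk i p.1).sum fun k t => Finsupp.single (k, p.2.1, p.2.2) t)
        + sgn (par i * par p.1) •
            ((bk i p.2.1).sum fun k t => Finsupp.single (p.1, k, p.2.2) t)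
        + sgn (par i * (par p.1 + par p.2.1)) •
            ((bk i p.2.2).sum fun k t => Finsupp.single (p.1, p.2.1, k) t))

/-- the adjoint diagonal action of `𝓛` on the `n`-fold tensor power `𝓛^{⊗n}`,
realized as the free complex vector space on `n`-tuples of basis indices:
`x ∗ (a₁ ⊗ ⋯ ⊗ aₙ) = Σ_k (-1)^{[x]([a₁]+⋯+[a_{k-1}])} a₁ ⊗ ⋯ ⊗ [x,a_k] ⊗ ⋯ ⊗ aₙ`. -/
def actN (n : ℕ) (x : Lsa) (v : (Fin n → Idx) →₀ ℂ) : (Fin n → Idx) →₀ ℂ :=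
  x.sum fun i a => v.sum fun f c =>
    (a * c) •
      (Finset.univ.sum fun k : Fin n =>
        sgn (par i * ((Finset.univ.filter fun l => l < k).sum fun l => par (f l))) •
          ((bk i (f k)).sum fun j t => Finsupp.single (Function.update f k j) t))

/-- the super-twist map `τ : 𝓛 ⊗ 𝓛 → 𝓛 ⊗ 𝓛`, `τ(x ⊗ y) = (-1)^{[x][y]} y ⊗ x`. -/
def tau (v : V) : V :=
  v.sum fun p c => (sgn (par p.1 * par p.2) * c) • Finsupp.single (p.2, p.1) 1

/-- the image `Im(1⊗1 - τ) ⊂ 𝓛 ⊗ 𝓛`. -/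
def ImOneSubTau : Set V := Set.range fun v : V => v - tau v

/-- the super-cyclic map `ξ` on `𝓛 ⊗ 𝓛 ⊗ 𝓛`:
`ξ(x₁ ⊗ x₂ ⊗ x₃) = (-1)^{[x₁]([x₂]+[x₃])} x₂ ⊗ x₃ ⊗ x₁`. -/
def xi (w : W) : W :=
  w.sum fun p c =>
    (sgn (par p.1 * (par p.2.1 + par p.2.2)) * c) • Finsupp.single (p.2.1, p.2.2, p.1) 1

/-- `c(r) = [r¹², r¹³] + [r¹², r²³] + [r¹³, r²³] ∈ 𝓛 ⊗ 𝓛 ⊗ 𝓛` for `r ∈ 𝓛 ⊗ 𝓛`. -/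
def cYB (r : V) : W :=
  r.sum fun p a => r.sum fun q b =>
    (a * b) •
      (sgn (par q.1 * par p.2) •
          ((bk p.1 q.1).sum fun k t => Finsupp.single (k, p.2, q.2) t)
        + ((bk p.2 q.1).sum fun k t => Finsupp.single (p.1, k, q.2) t)
        + sgn (par q.1 * par p.2) •
            ((bk p.2 q.2).sum fun k t => Finsupp.single (p.1, q.1, k) t))

/-- `1 ⊗ D : 𝓛 ⊗ 𝓛 → 𝓛 ⊗ 𝓛 ⊗ 𝓛` for an even map `D : 𝓛 → 𝓛 ⊗ 𝓛`. -/
def oneTensorMap (D : Lsa → V) (v : V) : W :=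
  v.sum fun p c => c • ((D (e p.2)).sum fun q t => Finsupp.single (p.1, q.1, q.2) t)

/-- `r ∈ 𝓛 ⊗ 𝓛` is homogeneous of parity `ε ∈ ℤ₂`. -/
def IsParityV (ε : ZMod 2) (r : V) : Prop := ∀ p ∈ r.support, par p.1 + par p.2 = ε

/-- `r ∈ 𝓛 ⊗ 𝓛` is even (degree `0̄`). -/
def IsEvenV (r : V) : Prop := IsParityV 0 r

/-- `r` lies in the graded component `V_ι = Σ_{j+k=ι} 𝓛_j ⊗ 𝓛_k` of `V = 𝓛 ⊗ 𝓛`. -/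
def IsDegV (ι : ℚ) (r : V) : Prop := ∀ p ∈ r.support, qdeg p.1 + qdeg p.2 = ι

/-- the linear map `𝓛 → M` with the prescribed values on the basis. -/
def ofBasis {M : Type*} [AddCommMonoid M] [Module ℂ M] (g : Idx → M) : Lsa →ₗ[ℂ] M :=
  Finsupp.lsum ℂ fun i => LinearMap.toSpanSingleton ℂ M (g i)

/-- the inner super-derivation `a_inn` attached to `a ∈ 𝓛 ⊗ 𝓛` of parity `ε`:
`a_inn(x) = (-1)^{[a][x]} x ∗ a` for homogeneous `x`, extended linearly. -/
def innMap (ε : ZMod 2) (a : V) : Lsa →ₗ[ℂ] V :=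
  ofBasis fun i => sgn (ε * par i) • act2 (e i) a

/-- `d : 𝓛 → 𝓛 ⊗ 𝓛` is a super-derivation of parity `ε`:
`d(𝓛_ī) ⊆ V_{ī+ε}` and
`d([x,y]) = (-1)^{[d][x]} x ∗ d(y) - (-1)^{[y]([d]+[x])} y ∗ d(x)`
for homogeneous `x, y` (stated on basis elements and extended bilinearly). -/
def IsDerOfParity (ε : ZMod 2) (d : Lsa →ₗ[ℂ] V) : Prop :=
  (∀ i : Idx, IsParityV (par i + ε) (d (e i))) ∧
  (∀ i j : Idx,
    d (bk i j)
      = sgn (ε * par i) • act2 (e i) (d (e j))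
        - sgn (par j * (ε + par i)) • act2 (e j) (d (e i)))

/-- `d` is homogeneous of degree `ι ∈ (1/2)ℤ` with respect to the `(1/2)ℤ`-grading:
`d(𝓛_j) ⊆ V_{ι+j}`. -/
def IsDegHomogDer (ι : ℚ) (d : Lsa →ₗ[ℂ] V) : Prop :=
  ∀ i : Idx, IsDegV (ι + qdeg i) (d (e i))

/-- `D : 𝓛 → 𝓛 ⊗ 𝓛` defines a Lie super-bialgebra structure on `𝓛`: it is linear,
`D(𝓛_ī) ⊆ Σ_j 𝓛_j̄ ⊗ 𝓛_{ī-j̄}`, `Im D ⊆ Im(1⊗1-τ)`,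
`(1⊗1⊗1 + ξ + ξ²)(1 ⊗ D)D = 0`, and
`D([x,y]) = x ∗ D(y) - (-1)^{[x][y]} y ∗ D(x)`. -/
structure IsLieSuperBialgebraDelta (D : Lsa → V) : Prop where
  linear : IsLinearMap ℂ D
  parity : ∀ i : Idx, IsParityV (par i) (D (e i))
  skewIm : ∀ x : Lsa, D x ∈ ImOneSubTau
  coJacobi : ∀ x : Lsa,
    oneTensorMap D (D x) + xi (oneTensorMap D (D x)) + xi (xi (oneTensorMap D (D x))) = 0
  cocycle : ∀ i j : Idx,
    D (bk i j) = act2 (e i) (D (e j)) - sgn (par i * par j) • act2 (e j) (D (e i))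

/-!
The idea is to study the operators `T_r` on `V`. On the odd part of `V`, `T_{1/2}` is invertible:
one tensor factor is some `G_p`, which `T_r` shifts to `G_{p+r}`, while `T_r T_s` kills the other
factor, so `T_{1/2} T_{-1/2}` is unipotent. Subtracting from `d` the inner derivation of
`u = T_{1/2}⁻¹ d(T_{1/2})` one may therefore assume `d(T_{1/2}) = 0`. Then `T_{1/2}` annihilates
every `d(T_r)`, hence these vanish, hence in turn so do the `d(L_m)`. Finally
`T_r ∗ d(G_p) = d(G_{p+r})`, so `T_{1/2}³` and `T_{3/2}` agree on `d(G_p)`; since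
`T_{1/2} T_{-1/2} (T_{1/2}³ - T_{3/2}) = 3 T_{1/2}³` on the even part of `V`, this forces
`d(G_{p+3/2}) = 0`. The inverse of `T_{1/2}` is a polynomial in `T_{1/2}` and `T_{-1/2}`, so `u` is
homogeneous whenever `d` is.
-/

open TensorProduct

section Bracket

lemma ofBasis_e {M : Type*} [AddCommMonoid M] [Module ℂ M] (g : Idx → M) (i : Idx) :
    ofBasis g (e i) = g i := by
  simp [ofBasis, e]

lemma lsa_hom_ext {M : Type*} [AddCommMonoid M] [Module ℂ M] {f g : Lsa →ₗ[ℂ] M}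
    (h : ∀ i, f (e i) = g (e i)) : f = g :=
  Finsupp.lhom_ext' fun i => LinearMap.ext_ring (h i)

/-- The adjoint representation `x ↦ [x, ·]`, as a linear map into the endomorphisms of `𝓛`. -/
def ad : Lsa →ₗ[ℂ] Module.End ℂ Lsa := ofBasis fun i => ofBasis (bk i)

lemma ad_e_e (i j : Idx) : ad (e i) (e j) = bk i j := by
  simp only [ad, ofBasis_e]

lemma neg_one_zpow_succ (n : ℤ) : (-1 : ℂ) ^ (n + 1) = -(-1) ^ n := by
  simp [zpow_add₀]

lemma neg_one_zpow_add_two_mul (n k : ℤ) : (-1 : ℂ) ^ (n + 2 * k) = (-1) ^ n := by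
  simp [zpow_add₀, zpow_mul]

lemma ad_bk_T_G_G (k n n' : ℤ) :
    ad (bk (.T k) (.G n)) (e (.G n')) =
      ad (e (.T k)) (bk (.G n) (.G n')) - ad (e (.G n)) (bk (.T k) (.G n')) := by
  have hsign := neg_one_zpow_add_two_mul n k
  by_cases hp : (n + n') % 2 = 0
  · have hp' : ¬ (n + n' + 2 * k + 1) % 2 = 0 := by omega
    have hidx : (n + n' + 2 * k + 1 - 1) / 2 = k + (n + n') / 2 := by omega
    simp only [bk, ad_e_e, map_smul, if_pos hp, neg_one_zpow_succ, hsign, smul_smul,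
      show n + 2 * k + 1 + n' = n + n' + 2 * k + 1 by ring,
      show n + (n' + 2 * k + 1) = n + n' + 2 * k + 1 by ring, if_neg hp', hidx]
    push_cast
    module
  · have hp' : (n + n' + 2 * k + 1) % 2 = 0 := by omega
    simp only [bk, ad_e_e, map_smul, if_neg hp, neg_one_zpow_succ, hsign, smul_zero,
      show n + 2 * k + 1 + n' = n + n' + 2 * k + 1 by ring,
      show n + (n' + 2 * k + 1) = n + n' + 2 * k + 1 by ring, if_pos hp']
    module

lemma ad_bk_T (k : ℤ) (j : Idx) : ad (bk (.T k) j) = ⁅ad (e (.T k)), ad (e j)⁆ := by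
  refine lsa_hom_ext fun l => ?_
  simp only [Ring.lie_def, LinearMap.sub_apply, Module.End.mul_apply, ad_e_e]
  rcases j with m | r | n <;> rcases l with m' | r' | n'
  case G.G => exact ad_bk_T_G_G k n n'
  all_goals
    simp only [bk, ad_e_e, map_smul, map_neg, map_zero, LinearMap.smul_apply,
      LinearMap.zero_apply, smul_smul]
    push_cast
    try ring_nf
  all_goals module

end Bracket

section DiagonalAction

/-- The operator `x ↦ (-1)^{ε[x]} x` of `𝓛`: the sign picked up by an element of parity `ε` when
it moves past `x`. -/
def koszulSign (ε : ZMod 2) : Module.End ℂ Lsa := ofBasis fun j => sgn (ε * par j) • e j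

lemma koszulSign_e (ε : ZMod 2) (j : Idx) : koszulSign ε (e j) = sgn (ε * par j) • e j :=
  ofBasis_e _ _

lemma koszulSign_zero : koszulSign 0 = 1 :=
  lsa_hom_ext fun i => by simp [koszulSign_e, sgn]

lemma koszulSign_mul_ad_T (ε : ZMod 2) (k : ℤ) :
    koszulSign ε * ad (e (.T k)) = ad (e (.T k)) * koszulSign ε :=
  lsa_hom_ext fun i => by cases i <;> simp [koszulSign_e, ad_e_e, bk, par, smul_smul, mul_comm]

/-- The identification of the abstract tensor square of `𝓛` with its model `V`. -/
def tensorEquiv : Lsa ⊗[ℂ] Lsa ≃ₗ[ℂ] V := finsuppTensorFinsupp' ℂ Idx Idx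

lemma tensorEquiv_e_tmul_e (a b : Idx) : tensorEquiv (e a ⊗ₜ e b) = Finsupp.single (a, b) 1 := by
  simp [tensorEquiv, e]

/-- The diagonal action on `V` of an element `x` of parity `ε`. Since the sign
`(-1)^{[x][a]}` is not linear in `x`, the parity is a separate argument. -/
def diagAct (ε : ZMod 2) : Lsa →ₗ[ℂ] Module.End ℂ V :=
  tensorEquiv.conj.toLinearMap ∘ₗ
    ((mapBilinear _ _ _ _ _).flip 1 + mapBilinear _ _ _ _ _ (koszulSign ε)) ∘ₗ ad

lemma diagAct_tmul (ε : ZMod 2) (x a b : Lsa) :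
    diagAct ε x (tensorEquiv (a ⊗ₜ b)) =
      tensorEquiv (ad x a ⊗ₜ b) + tensorEquiv (koszulSign ε a ⊗ₜ ad x b) := by
  simp [diagAct, LinearEquiv.conj_apply]

lemma diagAct_single (ε : ZMod 2) (x : Lsa) (a b : Idx) :
    diagAct ε x (Finsupp.single (a, b) 1) =
      tensorEquiv (ad x (e a) ⊗ₜ e b) + sgn (ε * par a) • tensorEquiv (e a ⊗ₜ ad x (e b)) := by
  rw [← tensorEquiv_e_tmul_e, diagAct_tmul, koszulSign_e, ← smul_tmul', map_smul]

lemma tensorEquiv_tmul_e (x : Lsa) (b : Idx) :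
    tensorEquiv (x ⊗ₜ e b) = x.sum fun k t => Finsupp.single (k, b) t := by
  induction x using Finsupp.induction_linear with
  | zero => simp
  | add x y hx hy => rw [add_tmul, map_add, hx, hy, Finsupp.sum_add_index'] <;> simp
  | single a c => simp [tensorEquiv, e]

lemma tensorEquiv_e_tmul (a : Idx) (x : Lsa) :
    tensorEquiv (e a ⊗ₜ x) = x.sum fun k t => Finsupp.single (a, k) t := by
  induction x using Finsupp.induction_linear with
  | zero => simp
  | add x y hx hy => rw [tmul_add, map_add, hx, hy, Finsupp.sum_add_index'] <;> simp
  | single a c => simp [tensorEquiv, e]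

lemma act2_e (i : Idx) (v : V) : act2 (e i) v = diagAct (par i) (e i) v := by
  conv_rhs => rw [← Finsupp.sum_single v, map_finsuppSum]
  rw [act2]
  nth_rw 1 [e]
  rw [Finsupp.sum_single_index (by simp)]
  refine Finsupp.sum_congr fun p _ => ?_
  rw [← Finsupp.smul_single_one p, map_smul, one_mul, diagAct_single, ad_e_e, ad_e_e,
    tensorEquiv_tmul_e, tensorEquiv_e_tmul]

lemma diagAct_bk_T (ε : ZMod 2) (k : ℤ) (j : Idx) :
    diagAct ε (bk (.T k) j) = ⁅diagAct 0 (e (.T k)), diagAct ε (e j)⁆ := by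
  refine LinearMap.ext fun v => ?_
  obtain ⟨w, rfl⟩ := tensorEquiv.surjective v
  induction w with
  | zero => simp
  | add w w' hw hw' => simp only [map_add, hw, hw']
  | tmul a b =>
    have hsign := LinearMap.congr_fun (koszulSign_mul_ad_T ε k) a
    simp only [Module.End.mul_apply] at hsign
    simp only [Ring.lie_def, LinearMap.sub_apply, Module.End.mul_apply, diagAct_tmul, ad_bk_T,
      map_add, koszulSign_zero, Module.End.one_apply, hsign, sub_tmul, tmul_sub, map_sub]
    abel

end DiagonalAction

section Grading

variable {A : Type*} [AddCommMonoid A] {γ : Idx → A}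

/-- An additive weight `γ` on the basis of `𝓛` for which the bracket is homogeneous; the parity and
the degree are the two examples. -/
def IsBracketGrading (γ : Idx → A) : Prop :=
  ∀ i j, bk i j ∈ Finsupp.supported ℂ ℂ {k | γ k = γ i + γ j}

/-- The homogeneous component of weight `q` of `V` for the total weight `γ ⊗ 1 + 1 ⊗ γ`. -/
def gradedPart (γ : Idx → A) (q : A) : Submodule ℂ V :=
  Finsupp.supported ℂ ℂ {p | γ p.1 + γ p.2 = q}

lemma smul_e_mem_supported (c : ℂ) {s : Set Idx} {i : Idx} (hi : i ∈ s) :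
    c • e i ∈ Finsupp.supported ℂ ℂ s :=
  Submodule.smul_mem _ _ (Finsupp.single_mem_supported ℂ 1 hi)

lemma isBracketGrading_of (hLL : ∀ m m', γ (.L (m + m')) = γ (.L m) + γ (.L m'))
    (hLT : ∀ m k, γ (.T (k + m)) = γ (.L m) + γ (.T k))
    (hLG : ∀ m n, γ (.G (n + 2 * m)) = γ (.L m) + γ (.G n))
    (hTG : ∀ k n, γ (.G (n + 2 * k + 1)) = γ (.T k) + γ (.G n))
    (hGL : ∀ n n', (n + n') % 2 = 0 → γ (.L ((n + n') / 2)) = γ (.G n) + γ (.G n'))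
    (hGT : ∀ n n', ¬(n + n') % 2 = 0 → γ (.T ((n + n' - 1) / 2)) = γ (.G n) + γ (.G n')) :
    IsBracketGrading γ := by
  rintro (m | k | n) (m' | k' | n') <;> simp only [bk]
  case L.L => exact smul_e_mem_supported _ (hLL m m')
  case L.T => exact smul_e_mem_supported _ (hLT m k')
  case L.G => exact smul_e_mem_supported _ (hLG m n')
  case T.L => exact smul_e_mem_supported _ ((hLT m' k).trans (add_comm _ _))
  case T.T => exact zero_mem _
  case T.G => exact Finsupp.single_mem_supported ℂ 1 (hTG k n')
  case G.L => exact smul_e_mem_supported _ ((hLG m' n).trans (add_comm _ _))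
  case G.T => exact neg_mem (Finsupp.single_mem_supported ℂ 1 ((hTG k' n).trans (add_comm _ _)))
  case G.G =>
    split_ifs with h
    · exact smul_e_mem_supported _ (hGL n n' h)
    · exact smul_e_mem_supported _ (hGT n n' h)

lemma isBracketGrading_par : IsBracketGrading par := by
  apply isBracketGrading_of <;> intros <;> rfl

lemma qdeg_L_add_div_two {n n' : ℤ} (h : (n + n') % 2 = 0) :
    qdeg (.L ((n + n') / 2)) = qdeg (.G n) + qdeg (.G n') := by
  have hdvd : (2 : ℤ) ∣ n + n' := Int.dvd_of_emod_eq_zero h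
  rw [qdeg, qdeg, qdeg, Int.cast_div_charZero hdvd]
  push_cast
  ring

lemma qdeg_T_add_sub_one_div_two {n n' : ℤ} (h : ¬(n + n') % 2 = 0) :
    qdeg (.T ((n + n' - 1) / 2)) = qdeg (.G n) + qdeg (.G n') := by
  have hdvd : (2 : ℤ) ∣ n + n' - 1 := by omega
  rw [qdeg, qdeg, qdeg, Int.cast_div_charZero hdvd]
  push_cast
  ring

lemma isBracketGrading_qdeg : IsBracketGrading qdeg := by
  refine isBracketGrading_of (fun m m' => Int.cast_add m m') (fun m k => ?_) (fun m n => ?_)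
    (fun k n => ?_) (fun n n' => qdeg_L_add_div_two) (fun n n' => qdeg_T_add_sub_one_div_two)
  all_goals
    simp only [qdeg]
    push_cast
    ring

lemma mem_gradedPart_par {ε : ZMod 2} {v : V} : v ∈ gradedPart par ε ↔ IsParityV ε v := Iff.rfl

lemma mem_gradedPart_qdeg {ι : ℚ} {v : V} : v ∈ gradedPart qdeg ι ↔ IsDegV ι v := Iff.rfl

lemma single_mem_gradedPart {q : A} {a b : Idx} (c : ℂ) (h : γ a + γ b = q) :
    Finsupp.single (a, b) c ∈ gradedPart γ q :=
  Finsupp.single_mem_supported ℂ c h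

lemma act2_e_mem_gradedPart (hγ : IsBracketGrading γ) (i : Idx) {q : A} {v : V}
    (hv : v ∈ gradedPart γ q) : act2 (e i) v ∈ gradedPart γ (γ i + q) := by
  rw [act2, e, Finsupp.sum_single_index (by simp)]
  refine Submodule.sum_mem _ fun p hp =>
    Submodule.smul_mem _ _ (add_mem ?_ (Submodule.smul_mem _ _ ?_))
  · refine Submodule.sum_mem _ fun k hk => single_mem_gradedPart _ ?_
    rw [(hγ i p.1 hk : γ k = _), add_assoc, hv hp]
  · refine Submodule.sum_mem _ fun k hk => single_mem_gradedPart _ ?_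
    rw [(hγ i p.2 hk : γ k = _), add_left_comm, hv hp]

lemma eqOn_gradedPart {q : A} {f g : V →ₗ[ℂ] V}
    (h : ∀ a b, γ a + γ b = q → f (Finsupp.single (a, b) 1) = g (Finsupp.single (a, b) 1)) {v : V}
    (hv : v ∈ gradedPart γ q) : f v = g v := by
  rw [gradedPart, Finsupp.supported_eq_span_single] at hv
  refine LinearMap.eqOn_span ?_ hv
  rintro _ ⟨⟨a, b⟩, hab, rfl⟩
  exact h a b hab

end Grading

section Heisenberg

/-- The action of `T_{k+1/2}` on `V`. -/
def actT (k : ℤ) : Module.End ℂ V := diagAct 0 (e (.T k))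

lemma actT_tmul (k : ℤ) (a b : Lsa) :
    actT k (tensorEquiv (a ⊗ₜ b)) =
      tensorEquiv (ad (e (.T k)) a ⊗ₜ b) + tensorEquiv (a ⊗ₜ ad (e (.T k)) b) := by
  rw [actT, diagAct_tmul, koszulSign_zero, Module.End.one_apply]

lemma actT_comm (k l : ℤ) (v : V) : actT k (actT l v) = actT l (actT k v) := by
  have h := LinearMap.congr_fun (diagAct_bk_T 0 k (.T l)) v
  rw [bk, map_zero, Ring.lie_def, LinearMap.sub_apply] at h
  exact sub_eq_zero.1 h.symm

lemma ad_T_ad_T_of_even (k l : ℤ) {i : Idx} (hi : par i = 0) :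
    ad (e (.T k)) (ad (e (.T l)) (e i)) = 0 := by
  rcases i with m | r | n
  · simp only [ad_e_e, bk, map_smul, smul_zero]
  · simp only [ad_e_e, bk, map_zero]
  · exact absurd hi one_ne_zero

lemma actT_mul_sub_one_tmul_G {a : Lsa} (n : ℤ)
    (ha : ad (e (.T 0)) (ad (e (.T (-1))) a) = 0) :
    (actT 0 * actT (-1) - 1) (tensorEquiv (a ⊗ₜ e (.G n))) =
      tensorEquiv (ad (e (.T (-1))) a ⊗ₜ e (.G (n + 1))) +
        tensorEquiv (ad (e (.T 0)) a ⊗ₜ e (.G (n - 1))) := by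
  simp only [LinearMap.sub_apply, Module.End.mul_apply, Module.End.one_apply, actT_tmul, map_add,
    ha, ad_e_e, bk, zero_tmul, map_zero]
  ring_nf
  abel

lemma actT_mul_sub_one_G_tmul {a : Lsa} (n : ℤ)
    (ha : ad (e (.T 0)) (ad (e (.T (-1))) a) = 0) :
    (actT 0 * actT (-1) - 1) (tensorEquiv (e (.G n) ⊗ₜ a)) =
      tensorEquiv (e (.G (n + 1)) ⊗ₜ ad (e (.T (-1))) a) +
        tensorEquiv (e (.G (n - 1)) ⊗ₜ ad (e (.T 0)) a) := by
  simp only [LinearMap.sub_apply, Module.End.mul_apply, Module.End.one_apply, actT_tmul, map_add,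
    ha, ad_e_e, bk, tmul_zero, map_zero]
  ring_nf
  abel

lemma actT_actT_actT_of_even (k l m : ℤ) {i j : Idx} (hi : par i = 0) (hj : par j = 0) :
    actT k (actT l (actT m (Finsupp.single (i, j) 1))) = 0 := by
  simp only [← tensorEquiv_e_tmul_e, actT_tmul, map_add,
    ad_T_ad_T_of_even, hi, hj, map_zero, zero_tmul, tmul_zero, add_zero]

lemma actT_G_G (k n n' : ℤ) :
    actT k (Finsupp.single (.G n, .G n') 1) =
      Finsupp.single (.G (n + 2 * k + 1), .G n') 1 +
        Finsupp.single (.G n, .G (n' + 2 * k + 1)) 1 := by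
  simp only [← tensorEquiv_e_tmul_e, actT_tmul, ad_e_e, bk]

lemma actT_mul_sub_one_sq {v : V} (hv : v ∈ gradedPart par 1) :
    ((actT 0 * actT (-1) - 1) ^ 2 : Module.End ℂ V) v = 0 := by
  refine eqOn_gradedPart (g := 0) (fun i j hij => ?_) hv
  obtain ⟨hi, n, rfl⟩ | ⟨hj, n, rfl⟩ :
      (par i = 0 ∧ ∃ n, j = .G n) ∨ (par j = 0 ∧ ∃ n, i = .G n) := by
    rcases i <;> rcases j <;> simp_all [par]
  · rw [pow_two, Module.End.mul_apply, ← tensorEquiv_e_tmul_e,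
      actT_mul_sub_one_tmul_G _ (ad_T_ad_T_of_even _ _ hi), map_add,
      actT_mul_sub_one_tmul_G, actT_mul_sub_one_tmul_G] <;>
    simp only [ad_T_ad_T_of_even _ _ hi, map_zero, zero_tmul, add_zero, LinearMap.zero_apply]
  · rw [pow_two, Module.End.mul_apply, ← tensorEquiv_e_tmul_e,
      actT_mul_sub_one_G_tmul _ (ad_T_ad_T_of_even _ _ hj), map_add,
      actT_mul_sub_one_G_tmul, actT_mul_sub_one_G_tmul] <;>
    simp only [ad_T_ad_T_of_even _ _ hj, map_zero, tmul_zero, add_zero, LinearMap.zero_apply]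

/- On `G_p ⊗ G_q` let `x` and `y` shift the two factors by degree `1 / 2`. Then `T_{k+1/2}` acts as
`p_{2k+1} = x^{2k+1} + y^{2k+1}`, and `p₁³ - p₃ = 3xyp₁` while `p₁p₋₁ = p₁² / (xy)`. -/
lemma actT_pow_three_sub {v : V} (hv : v ∈ gradedPart par 0) :
    (actT 0 * actT (-1) * (actT 0 ^ 3 - actT 1)) v = ((3 : ℂ) • actT 0 ^ 3 : Module.End ℂ V) v := by
  refine eqOn_gradedPart (fun i j hij => ?_) hv
  simp only [pow_three', Module.End.mul_apply, LinearMap.sub_apply, LinearMap.smul_apply]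
  obtain ⟨hi, hj⟩ | ⟨n, n', rfl, rfl⟩ :
      (par i = 0 ∧ par j = 0) ∨ ∃ n n', i = .G n ∧ j = .G n' := by
    rcases i <;> rcases j <;> simp_all [par]
  · simp only [map_sub, actT_actT_actT_of_even, hi, hj, map_zero, smul_zero, sub_zero]
  · simp only [map_sub, map_add, actT_G_G]
    ring_nf
    module

end Heisenberg

section Inverse

/-- The inverse of `T_{1/2}` on the odd part of `V`, where `N = T_{1/2}T_{-1/2} - 1` has square
zero and `T_{-1/2}(1 - N)` therefore inverts `T_{1/2}`. -/
def actTInv : Module.End ℂ V := (2 : ℂ) • actT (-1) - actT (-1) * actT 0 * actT (-1)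

lemma actTInv_apply (v : V) :
    actTInv v = (2 : ℂ) • actT (-1) v - actT (-1) (actT 0 (actT (-1) v)) :=
  rfl

lemma actT_zero_actTInv {v : V} (hv : v ∈ gradedPart par 1) : actT 0 (actTInv v) = v := by
  have hsq := actT_mul_sub_one_sq hv
  simp only [pow_two, Module.End.mul_apply, LinearMap.sub_apply, Module.End.one_apply,
    map_sub] at hsq
  rw [actTInv_apply, map_sub, map_smul, ← sub_eq_zero, ← neg_eq_zero, ← hsq]
  module

lemma actTInv_actT_zero (v : V) : actTInv (actT 0 v) = actT 0 (actTInv v) := by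
  simp only [actTInv_apply, map_sub, map_smul, actT_comm 0 (-1)]

lemma eq_zero_of_actT_zero_eq_zero {v : V} (hv : v ∈ gradedPart par 1) (h : actT 0 v = 0) :
    v = 0 := by
  rw [← actT_zero_actTInv hv, ← actTInv_actT_zero, h, map_zero]

lemma actTInv_mem_gradedPart {A : Type*} [AddCommGroup A] {γ : Idx → A} (hγ : IsBracketGrading γ)
    (hneg : γ (.T 0) + γ (.T (-1)) = 0) {q : A} {v : V} (hv : v ∈ gradedPart γ q) :
    actTInv v ∈ gradedPart γ (γ (.T (-1)) + q) := by
  have hT (k : ℤ) {q : A} {w : V} (hw : w ∈ gradedPart γ q) :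
      actT k w ∈ gradedPart γ (γ (.T k) + q) :=
    (act2_e (.T k) w).symm ▸ act2_e_mem_gradedPart hγ (.T k) hw
  have hprod : actT 0 (actT (-1) v) ∈ gradedPart γ q := by
    simpa only [← add_assoc, hneg, zero_add] using hT 0 (hT (-1) hv)
  exact sub_mem (Submodule.smul_mem _ 2 (hT (-1) hv)) (hT (-1) hprod)

end Inverse

section Cocycle

/-- The derivation identity of parity `ε` for `D`, required only for the brackets with the
generators `T_{k+1/2}`. -/
def IsTCocycle (ε : ZMod 2) (D : Lsa →ₗ[ℂ] V) : Prop :=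
  ∀ k j, D (bk (.T k) j) =
    actT k (D (e j)) - sgn (par j * ε) • diagAct (par j) (e j) (D (e (.T k)))

lemma IsDerOfParity.isTCocycle {ε : ZMod 2} {d : Lsa →ₗ[ℂ] V} (hd : IsDerOfParity ε d) :
    IsTCocycle ε d := by
  intro k j
  have h := hd.2 (.T k) j
  simpa [par, sgn, act2_e, actT] using h

lemma IsTCocycle.sub {ε : ZMod 2} {D D' : Lsa →ₗ[ℂ] V} (h : IsTCocycle ε D)
    (h' : IsTCocycle ε D') : IsTCocycle ε (D - D') := by
  intro k j
  simp only [LinearMap.sub_apply, h k j, h' k j, map_sub]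
  module

lemma innMap_e (ε : ZMod 2) (u : V) (i : Idx) :
    innMap ε u (e i) = sgn (ε * par i) • act2 (e i) u :=
  ofBasis_e _ _

lemma innMap_e_T (ε : ZMod 2) (u : V) (k : ℤ) : innMap ε u (e (.T k)) = actT k u := by
  rw [innMap_e, act2_e]
  simp [par, sgn, actT]

lemma innMap_apply_of_mem (ε : ZMod 2) (u : V) {π : ZMod 2} {x : Lsa}
    (hx : x ∈ Finsupp.supported ℂ ℂ {i | par i = π}) :
    innMap ε u x = sgn (ε * π) • diagAct π x u := by
  rw [Finsupp.supported_eq_span_single] at hx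
  refine LinearMap.eqOn_span (g := sgn (ε * π) • (diagAct π).flip u) ?_ hx
  rintro _ ⟨i, rfl, rfl⟩
  exact (innMap_e ε u i).trans (congrArg _ (act2_e i u))

lemma isTCocycle_innMap (ε : ZMod 2) (u : V) : IsTCocycle ε (innMap ε u) := by
  intro k j
  have hbk : bk (.T k) j ∈ Finsupp.supported ℂ ℂ {i | par i = par j} := by
    simpa [par] using isBracketGrading_par (.T k) j
  rw [innMap_apply_of_mem ε u hbk, innMap_e_T, innMap_e, act2_e, diagAct_bk_T,
    Ring.lie_def, LinearMap.sub_apply, smul_sub, map_smul, mul_comm (par j)]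
  rfl

lemma innMap_mem_gradedPart {ε : ZMod 2} {u : V} (hu : u ∈ gradedPart par ε) (i : Idx) :
    innMap ε u (e i) ∈ gradedPart par (par i + ε) := by
  rw [innMap_e]
  exact Submodule.smul_mem _ _ (act2_e_mem_gradedPart isBracketGrading_par i hu)

end Cocycle

section Vanishing

variable {ε : ZMod 2} {D : Lsa →ₗ[ℂ] V}

lemma IsTCocycle.apply_T_eq_zero (hD : IsTCocycle ε D) (hzero : D (e (.T 0)) = 0) {k : ℤ}
    (hodd : D (e (.T k)) ∈ gradedPart par 1) : D (e (.T k)) = 0 := by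
  refine eq_zero_of_actT_zero_eq_zero hodd ?_
  have h := hD 0 (.T k)
  rw [hzero, map_zero, smul_zero, sub_zero, bk, map_zero] at h
  exact h.symm

lemma IsTCocycle.actT_apply (hD : IsTCocycle ε D) (hT : ∀ k, D (e (.T k)) = 0)
    (k : ℤ) (j : Idx) : actT k (D (e j)) = D (bk (.T k) j) := by
  rw [hD k j, hT, map_zero, smul_zero, sub_zero]

lemma IsTCocycle.apply_L_eq_zero (hD : IsTCocycle ε D) (hT : ∀ k, D (e (.T k)) = 0)
    {m : ℤ} (hodd : D (e (.L m)) ∈ gradedPart par 1) : D (e (.L m)) = 0 := by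
  refine eq_zero_of_actT_zero_eq_zero hodd ?_
  rw [hD.actT_apply hT, bk, map_smul, hT, smul_zero]

lemma IsTCocycle.apply_G_eq_zero (hD : IsTCocycle ε D) (hT : ∀ k, D (e (.T k)) = 0)
    (heven : ∀ n, D (e (.G n)) ∈ gradedPart par 0) (n : ℤ) : D (e (.G n)) = 0 := by
  have hshift (k n : ℤ) : actT k (D (e (.G n))) = D (e (.G (n + 2 * k + 1))) :=
    hD.actT_apply hT k (.G n)
  have hcube : (actT 0 ^ 3) (D (e (.G (n - 3)))) = D (e (.G n)) := by
    simp only [pow_three', Module.End.mul_apply, hshift]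
    ring_nf
  have hone : actT 1 (D (e (.G (n - 3)))) = D (e (.G n)) := by
    rw [hshift]
    ring_nf
  have h := actT_pow_three_sub (heven (n - 3))
  simp only [Module.End.mul_apply, LinearMap.sub_apply, LinearMap.smul_apply, hcube, hone, sub_self,
    map_zero] at h
  exact (smul_eq_zero.1 h.symm).resolve_left three_ne_zero

lemma IsTCocycle.eq_zero (hD : IsTCocycle ε D)
    (hpar : ∀ i, D (e i) ∈ gradedPart par (par i + 1)) (hzero : D (e (.T 0)) = 0) : D = 0 := by
  have hT (k : ℤ) : D (e (.T k)) = 0 := hD.apply_T_eq_zero hzero (hpar (.T k))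
  refine lsa_hom_ext fun i => ?_
  rcases i with m | k | n
  · exact hD.apply_L_eq_zero hT (hpar (.L m))
  · exact hT k
  · exact hD.apply_G_eq_zero hT (fun n => hpar (.G n)) n

end Vanishing

theorem odd_degree_zero_der_is_inner_general (d : Lsa →ₗ[ℂ] V) (hd : IsDerOfParity 1 d) :
    ∃ u : V, IsParityV 1 u ∧ (∀ ι : ℚ, IsDegHomogDer ι d → IsDegV ι u) ∧
      ∀ i : Idx, d (e i) = sgn (par i) • act2 (e i) u := by
  have hpar (i : Idx) : d (e i) ∈ gradedPart par (par i + 1) := mem_gradedPart_par.2 (hd.1 i)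
  have hodd : d (e (.T 0)) ∈ gradedPart par 1 := hpar (.T 0)
  set u := actTInv (d (e (.T 0))) with hu
  have hupar : u ∈ gradedPart par 1 :=
    actTInv_mem_gradedPart isBracketGrading_par rfl hodd
  refine ⟨u, mem_gradedPart_par.1 hupar, fun ι hι => ?_, fun i => ?_⟩
  · have hdeg := actTInv_mem_gradedPart isBracketGrading_qdeg (by norm_num [qdeg])
      (mem_gradedPart_qdeg.2 (hι (.T 0)))
    have hι' : qdeg (.T (-1)) + (ι + qdeg (.T 0)) = ι := by norm_num [qdeg]
    rwa [← hu, hι', mem_gradedPart_qdeg] at hdeg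
  · have hT : innMap 1 u (e (.T 0)) = d (e (.T 0)) := by
      rw [innMap_e_T, hu, actT_zero_actTInv hodd]
    have hzero : d - innMap 1 u = 0 :=
      (hd.isTCocycle.sub (isTCocycle_innMap 1 u)).eq_zero
        (fun i => sub_mem (hpar i) (innMap_mem_gradedPart hupar i)) (sub_eq_zero.2 hT.symm)
    have hi := LinearMap.congr_fun hzero (e i)
    rwa [LinearMap.sub_apply, LinearMap.zero_apply, sub_eq_zero, innMap_e, one_mul] at hi

/-- An odd homogeneous super-derivation `d₀ : 𝓛 → V = 𝓛 ⊗ 𝓛` of degree `0`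
is inner: there is an odd `u ∈ V_0` with `d₀(x) = (-1)^{[x]} x ∗ u`
for all homogeneous `x ∈ 𝓛`. -/
theorem odd_degree_zero_der_is_inner (d : Lsa →ₗ[ℂ] V)
    (hd : IsDerOfParity 1 d) (hhom : IsDegHomogDer 0 d) :
    ∃ u : V, IsParityV 1 u ∧ IsDegV 0 u ∧
      ∀ i : Idx, d (e i) = sgn (par i) • act2 (e i) u := by
  obtain ⟨u, hpar, hdeg, hinner⟩ := odd_degree_zero_der_is_inner_general d hd
  exact ⟨u, hpar, hdeg 0 hhom, hinner⟩

end
end N2
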